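/- arXiv:math/0501422 — 8 statements merged into one kernel-verified Lean document; each statement's English description precedes it below -/
import Mathlib

section
/- Let h be a real-valued C^2 function on an open subset of ℝ², and for w > 0 define the end chart α(u,w) = (u/w, h(u,w)/w, 1/w) ∈ ℝ³. Then the triple products of the second partial derivatives of α with α_u and α_w satisfy det[α_uu, α_u, α_w] = h_uu/w⁴, det[α_uw, α_u, α_w] = h_uw/w⁴, and det[α_ww, α_u, α_w] = h_ww/w⁴, where det[X,Y,Z] denotes the determinant of the 3×3 matrix with rows (or columns) X, Y, Z in ℝ³, and h_uu, h_uw, h_ww are the second partial derivatives of h at (u,w). Consequently the second fundamental form coefficients e = det[α_uu, α_u, α_w]/|α_u × α_w|, f = det[α_uw, α_u, α_w]/|α_u × α_w|, g = det[α_ww, α_u, α_w]/|α_u × α_w| equal h_uu/(w⁴√(EG−F²)), h_uw/(w⁴√(EG−F²)), h_ww/(w⁴√(EG−F²)) respectively, where EG − F² = |α_u × α_w|². -/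
noncomputable section

/-- Euclidean dot product on `ℝ³` (as `Fin 3 → ℝ`). -/
def dot3 (x y : Fin 3 → ℝ) : ℝ := x 0 * y 0 + x 1 * y 1 + x 2 * y 2

/-- Standard cross product on `ℝ³`. -/
def cross3 (x y : Fin 3 → ℝ) : Fin 3 → ℝ :=
  ![x 1 * y 2 - x 2 * y 1, x 2 * y 0 - x 0 * y 2, x 0 * y 1 - x 1 * y 0]

/-- Triple (determinant) product of three vectors in `ℝ³`. -/
def det3 (x y z : Fin 3 → ℝ) : ℝ := Matrix.det (Matrix.of ![x, y, z])

/-- Partial derivative with respect to the first variable. -/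
def pdu (f : ℝ × ℝ → ℝ) (p : ℝ × ℝ) : ℝ := fderiv ℝ f p (1, 0)

/-- Partial derivative with respect to the second variable. -/
def pdw (f : ℝ × ℝ → ℝ) (p : ℝ × ℝ) : ℝ := fderiv ℝ f p (0, 1)

/-- Partial derivative (vector valued) with respect to the first variable. -/
def vdu (f : ℝ × ℝ → Fin 3 → ℝ) (p : ℝ × ℝ) : Fin 3 → ℝ := fderiv ℝ f p (1, 0)

/-- Partial derivative (vector valued) with respect to the second variable. -/
def vdw (f : ℝ × ℝ → Fin 3 → ℝ) (p : ℝ × ℝ) : Fin 3 → ℝ := fderiv ℝ f p (0, 1)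

theorem aux_vec (f : ℝ × ℝ → Fin 3 → ℝ) (a b c : ℝ × ℝ → ℝ) (p v : ℝ × ℝ)
    (hf : f =ᶠ[nhds p] fun q => ![a q, b q, c q])
    (ha : DifferentiableAt ℝ a p) (hb : DifferentiableAt ℝ b p) (hc : DifferentiableAt ℝ c p) :
    fderiv ℝ f p v = ![fderiv ℝ a p v, fderiv ℝ b p v, fderiv ℝ c p v] := by
  rw [hf.fderiv_eq]
  have hd : ∀ i, DifferentiableAt ℝ (fun q => (![a q, b q, c q] : Fin 3 → ℝ) i) p := by
    intro i
    fin_cases i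
    · exact ha
    · exact hb
    · exact hc
  rw [fderiv_pi hd]
  ext i
  fin_cases i <;> rfl

theorem aux_div (a : ℝ × ℝ → ℝ) (n : ℕ) (p v : ℝ × ℝ) (hp : 0 < p.2)
    (ha : DifferentiableAt ℝ a p) :
    DifferentiableAt ℝ (fun q : ℝ × ℝ => a q / q.2 ^ n) p ∧
    fderiv ℝ (fun q : ℝ × ℝ => a q / q.2 ^ n) p v =
      fderiv ℝ a p v / p.2 ^ n - n * a p * v.2 / p.2 ^ (n + 1) := by
  have h1 : HasFDerivAt (fun q : ℝ × ℝ => q.2) (ContinuousLinearMap.snd ℝ ℝ ℝ) p :=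
    hasFDerivAt_snd
  have h2 := h1.pow n
  have h3 := ha.hasFDerivAt.mul
    ((hasDerivAt_inv (pow_ne_zero n hp.ne')).comp_hasFDerivAt p h2)
  simp only [div_eq_mul_inv (a _)]
  refine ⟨h3.differentiableAt, ?_⟩
  have h4 : fderiv ℝ (fun q : ℝ × ℝ => a q * (q.2 ^ n)⁻¹) p = _ := h3.fderiv
  rw [h4]
  rcases n with _ | n
  · simp
  · simp
    field_simp
    ring

/-- triple products and second fundamental form coefficients of the end chart
`α(u,w) = (u/w, h(u,w)/w, 1/w)`. -/
theorem stmt_2 (U : Set (ℝ × ℝ)) (hU : IsOpen U) (h : ℝ × ℝ → ℝ)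
    (hh : ContDiffOn ℝ 2 h U)
    (α : ℝ × ℝ → Fin 3 → ℝ)
    (hα : ∀ p : ℝ × ℝ, 0 < p.2 → α p = ![p.1 / p.2, h p / p.2, 1 / p.2]) :
    ∀ p ∈ U, 0 < p.2 →
      det3 (vdu (vdu α) p) (vdu α p) (vdw α p) = pdu (pdu h) p / p.2 ^ 4 ∧
      det3 (vdw (vdu α) p) (vdu α p) (vdw α p) = pdw (pdu h) p / p.2 ^ 4 ∧
      det3 (vdw (vdw α) p) (vdu α p) (vdw α p) = pdw (pdw h) p / p.2 ^ 4 ∧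
      (let E := dot3 (vdu α p) (vdu α p)
       let F := dot3 (vdu α p) (vdw α p)
       let G := dot3 (vdw α p) (vdw α p)
       let nrm := Real.sqrt
         (dot3 (cross3 (vdu α p) (vdw α p)) (cross3 (vdu α p) (vdw α p)))
       E * G - F ^ 2 =
         dot3 (cross3 (vdu α p) (vdw α p)) (cross3 (vdu α p) (vdw α p)) ∧
       det3 (vdu (vdu α) p) (vdu α p) (vdw α p) / nrm =
         pdu (pdu h) p / (p.2 ^ 4 * Real.sqrt (E * G - F ^ 2)) ∧
       det3 (vdw (vdu α) p) (vdu α p) (vdw α p) / nrm =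
         pdw (pdu h) p / (p.2 ^ 4 * Real.sqrt (E * G - F ^ 2)) ∧
       det3 (vdw (vdw α) p) (vdu α p) (vdw α p) / nrm =
         pdw (pdw h) p / (p.2 ^ 4 * Real.sqrt (E * G - F ^ 2))) := by
  intro p hpU hp
  have hV : ∀ q ∈ U, ContDiffAt ℝ 2 h q := fun q hq => hh.contDiffAt (hU.mem_nhds hq)
  have hd : ∀ q ∈ U, DifferentiableAt ℝ h q := fun q hq => (hV q hq).differentiableAt (by norm_num)
  have hdd : DifferentiableAt ℝ (fderiv ℝ h) p :=
    ((hV p hpU).fderiv_right (m := 1) (by norm_num)).differentiableAt (by norm_num)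
  have hdu : DifferentiableAt ℝ (pdu h) p := hdd.clm_apply (differentiableAt_const _)
  have hdw : DifferentiableAt ℝ (pdw h) p := hdd.clm_apply (differentiableAt_const _)
  have hpos : ∀ q : ℝ × ℝ, 0 < q.2 → ∀ᶠ r : ℝ × ℝ in nhds q, 0 < r.2 := fun q hq =>
    (isOpen_lt continuous_const continuous_snd).mem_nhds hq
  have first : ∀ v : ℝ × ℝ, ∀ q ∈ U, 0 < q.2 → fderiv ℝ α q v =
      ![v.1 / q.2 ^ 1 - q.1 * v.2 / q.2 ^ 2, fderiv ℝ h q v / q.2 ^ 1 - h q * v.2 / q.2 ^ 2,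
        - v.2 / q.2 ^ 2] := by
    intro v q hqU hq
    have A := aux_div (fun q => q.1) 1 q v hq differentiableAt_fst
    have B := aux_div h 1 q v hq (hd q hqU)
    have C := aux_div (fun _ => 1) 1 q v hq (differentiableAt_const _)
    rw [aux_vec α _ _ _ q v _ A.1 B.1 C.1, A.2, B.2, C.2]
    · have : fderiv ℝ (fun q : ℝ × ℝ => q.1) q v = v.1 := by
        rw [fderiv_fst]; rfl
      rw [this]
      simp [neg_div]
    · filter_upwards [hpos q hq] with r hr
      rw [hα r hr]; simp
  have evU : ∀ᶠ q in nhds p, q ∈ U ∧ 0 < q.2 := 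
    (hU.eventually_mem hpU).and (hpos p hp)
  have hu : ∀ q ∈ U, 0 < q.2 → vdu α q = ![1 / q.2 ^ 1, pdu h q / q.2 ^ 1, 0 / q.2 ^ 1] := by
    intro q hqU hq
    rw [vdu, first _ q hqU hq]; simp [pdu]
  have hw : ∀ q ∈ U, 0 < q.2 → vdw α q =
      ![(-q.1) / q.2 ^ 2, (pdw h q * q.2 - h q) / q.2 ^ 2, (-1) / q.2 ^ 2] := by
    intro q hqU hq
    rw [vdw, first _ q hqU hq]
    have := hq.ne'
    simp only [pdw]
    ext i
    fin_cases i
    · simp [neg_div]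
    · simp; field_simp
    · simp
  have second_u : ∀ v : ℝ × ℝ, fderiv ℝ (vdu α) p v =
      ![- v.2 / p.2 ^ 2, fderiv ℝ (pdu h) p v / p.2 - pdu h p * v.2 / p.2 ^ 2, 0] := by
    intro v
    have A := aux_div (fun _ => 1) 1 p v hp (differentiableAt_const _)
    have B := aux_div (pdu h) 1 p v hp hdu
    have C := aux_div (fun _ => 0) 1 p v hp (differentiableAt_const _)
    rw [aux_vec (vdu α) _ _ _ p v (evU.mono fun q hq => hu q hq.1 hq.2) A.1 B.1 C.1, A.2, B.2, C.2]
    simp [neg_div]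
  have hN : DifferentiableAt ℝ (fun q : ℝ × ℝ => pdw h q * q.2 - h q) p :=
    (hdw.mul differentiableAt_snd).sub (hd p hpU)
  have hNv : fderiv ℝ (fun q : ℝ × ℝ => pdw h q * q.2 - h q) p (0, 1) = pdw (pdw h) p * p.2 := by
    have := ((hdw.hasFDerivAt.mul (hasFDerivAt_snd (𝕜 := ℝ) (p := p))).sub (hd p hpU).hasFDerivAt).fderiv
    have h4 : fderiv ℝ (fun q : ℝ × ℝ => pdw h q * q.2 - h q) p = _ := this
    rw [h4]
    simp [pdw]
    ring
  have second_w : vdw (vdw α) p =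
      ![2 * p.1 / p.2 ^ 3, pdw (pdw h) p / p.2 - 2 * (pdw h p * p.2 - h p) / p.2 ^ 3,
        2 / p.2 ^ 3] := by
    have A := aux_div (fun q => -q.1) 2 p (0, 1) hp differentiableAt_fst.neg
    have B := aux_div _ 2 p (0, 1) hp hN
    have C := aux_div (fun _ => -1) 2 p (0, 1) hp (differentiableAt_const _)
    rw [vdw, aux_vec (vdw α) _ _ _ p (0, 1) (evU.mono fun q hq => hw q hq.1 hq.2) A.1 B.1 C.1,
      A.2, B.2, C.2, hNv]
    have : fderiv ℝ (fun q : ℝ × ℝ => -q.1) p (0, 1) = 0 := by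
      have h5 : fderiv ℝ (fun q : ℝ × ℝ => -q.1) p = _ :=
        (hasFDerivAt_fst (𝕜 := ℝ) (p := p)).neg.fderiv
      rw [h5]; simp
    rw [this]
    have := hp.ne'
    ext i
    fin_cases i
    · simp; field_simp
    · simp; field_simp
    · simp; field_simp
  have hp' := hp.ne'
  have key1 : det3 (vdu (vdu α) p) (vdu α p) (vdw α p) = pdu (pdu h) p / p.2 ^ 4 := by
    rw [vdu, second_u, hu p hpU hp, hw p hpU hp, det3, Matrix.det_fin_three]
    simp [← pdu.eq_1]
    field_simp
  have key2 : det3 (vdw (vdu α) p) (vdu α p) (vdw α p) = pdw (pdu h) p / p.2 ^ 4 := by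
    rw [show vdw (vdu α) p = _ from second_u _, hu p hpU hp, hw p hpU hp, det3, Matrix.det_fin_three]
    simp [← pdw.eq_1]
    field_simp
    ring
  have key3 : det3 (vdw (vdw α) p) (vdu α p) (vdw α p) = pdw (pdw h) p / p.2 ^ 4 := by
    rw [second_w, hu p hpU hp, hw p hpU hp, det3, Matrix.det_fin_three]
    simp
    field_simp
    ring
  have lag : ∀ x y : Fin 3 → ℝ, dot3 x x * dot3 y y - dot3 x y ^ 2 =
      dot3 (cross3 x y) (cross3 x y) := by
    intro x y
    simp [dot3, cross3]
    ring
  refine ⟨key1, key2, key3, lag _ _, ?_, ?_, ?_⟩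
  · rw [key1, lag, div_div]
  · rw [key2, lag, div_div]
  · rw [key3, lag, div_div]
end
end

section
/- Let h be a real-valued C^2 function on an open subset of ℝ², and for w > 0 let E = (1 + h_u²)/w², F = (h_u(w·h_w − h) − u)/w³, G = (1 + u² + (w·h_w − h)²)/w⁴ be the first fundamental form coefficients of the end chart α(u,w) = (u/w, h(u,w)/w, 1/w). Define N₁(u,w) = w·h_ww·(h_u(w·h_w − h) − u) − (1 + u² + (w·h_w − h)²)·h_uw, N₂(u,w) = w²(1 + h_u²)·h_ww − (1 + u² + (w·h_w − h)²)·h_uu, and N₃(u,w) = w(1 + h_u²)·h_uw − (h_u(w·h_w − h) − u)·h_uu. Then for all w > 0 the identities w⁴(F·h_ww − G·h_uw) = N₁, w⁴(E·h_ww − G·h_uu) = N₂, and w³(E·h_uw − F·h_uu) = N₃ hold; moreover N₁, N₂, N₃ are defined and continuous on the whole domain including w = 0, and if h(0,0) = 0 and h_u(0,0) = 0 then N₁(0,0) = −h_uw(0,0), N₂(0,0) = −h_uu(0,0), and N₃(0,0) = 0. -/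
noncomputable section

/-- Coefficient `N₁` of the extended curvature-line equation of the end chart. -/
def N1 (h : ℝ × ℝ → ℝ) (p : ℝ × ℝ) : ℝ :=
  p.2 * pdw (pdw h) p * (pdu h p * (p.2 * pdw h p - h p) - p.1)
    - (1 + p.1 ^ 2 + (p.2 * pdw h p - h p) ^ 2) * pdw (pdu h) p

/-- Coefficient `N₂` of the extended curvature-line equation of the end chart. -/
def N2 (h : ℝ × ℝ → ℝ) (p : ℝ × ℝ) : ℝ :=
  p.2 ^ 2 * (1 + (pdu h p) ^ 2) * pdw (pdw h) p
    - (1 + p.1 ^ 2 + (p.2 * pdw h p - h p) ^ 2) * pdu (pdu h) p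

/-- Coefficient `N₃` of the extended curvature-line equation of the end chart. -/
def N3 (h : ℝ × ℝ → ℝ) (p : ℝ × ℝ) : ℝ :=
  p.2 * (1 + (pdu h p) ^ 2) * pdw (pdu h) p
    - (pdu h p * (p.2 * pdw h p - h p) - p.1) * pdu (pdu h) p

/-- First fundamental form coefficient `E` of the end chart. -/
def EE (h : ℝ × ℝ → ℝ) (p : ℝ × ℝ) : ℝ := (1 + (pdu h p) ^ 2) / p.2 ^ 2

/-- First fundamental form coefficient `F` of the end chart. -/
def FF (h : ℝ × ℝ → ℝ) (p : ℝ × ℝ) : ℝ :=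
  (pdu h p * (p.2 * pdw h p - h p) - p.1) / p.2 ^ 3

/-- First fundamental form coefficient `G` of the end chart. -/
def GG (h : ℝ × ℝ → ℝ) (p : ℝ × ℝ) : ℝ :=
  (1 + p.1 ^ 2 + (p.2 * pdw h p - h p) ^ 2) / p.2 ^ 4

/-- the rescaled coefficients of the curvature-line equation of the end chart
extend continuously across the end locus `{w = 0}`, with the stated values at the origin. -/
theorem stmt_3 (U : Set (ℝ × ℝ)) (hU : IsOpen U) (h : ℝ × ℝ → ℝ)
    (hh : ContDiffOn ℝ 2 h U) :
    (∀ p ∈ U, 0 < p.2 →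
      p.2 ^ 4 * (FF h p * pdw (pdw h) p - GG h p * pdw (pdu h) p) = N1 h p ∧
      p.2 ^ 4 * (EE h p * pdw (pdw h) p - GG h p * pdu (pdu h) p) = N2 h p ∧
      p.2 ^ 3 * (EE h p * pdw (pdu h) p - FF h p * pdu (pdu h) p) = N3 h p) ∧
    ContinuousOn (N1 h) U ∧ ContinuousOn (N2 h) U ∧ ContinuousOn (N3 h) U ∧
    ((0, 0) ∈ U → h (0, 0) = 0 → pdu h (0, 0) = 0 →
      N1 h (0, 0) = -(pdw (pdu h) (0, 0)) ∧
      N2 h (0, 0) = -(pdu (pdu h) (0, 0)) ∧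
      N3 h (0, 0) = 0) := by
  have key : ∀ (v : ℝ × ℝ) (m n : WithTop ℕ∞) (f : ℝ × ℝ → ℝ), m + 1 ≤ n →
      ContDiffOn ℝ n f U → ContDiffOn ℝ m (fun p => fderiv ℝ f p v) U := by
    intro v m n f hmn hf
    exact (hf.fderiv_of_isOpen hU hmn).clm_apply contDiffOn_const
  have hu : ContDiffOn ℝ 1 (pdu h) U := key (1, 0) 1 2 h (by norm_num) hh
  have hw : ContDiffOn ℝ 1 (pdw h) U := key (0, 1) 1 2 h (by norm_num) hh
  have c0 := hh.continuousOn
  have cu := hu.continuousOn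
  have cw := hw.continuousOn
  have cuu : ContinuousOn (pdu (pdu h)) U :=
    (key (1, 0) 0 1 _ (by norm_num) hu).continuousOn
  have cuw : ContinuousOn (pdw (pdu h)) U :=
    (key (0, 1) 0 1 _ (by norm_num) hu).continuousOn
  have cww : ContinuousOn (pdw (pdw h)) U :=
    (key (0, 1) 0 1 _ (by norm_num) hw).continuousOn
  refine ⟨?_, ?_, ?_, ?_, ?_⟩
  · intro p _ hp
    have hp' : p.2 ≠ 0 := hp.ne'
    refine ⟨?_, ?_, ?_⟩
    · simp only [FF, GG, N1]; field_simp
    · simp only [EE, GG, N2]; field_simp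
    · simp only [EE, FF, N3]; field_simp
  · unfold N1; fun_prop
  · unfold N2; fun_prop
  · unfold N3; fun_prop
  · intro _ h0 h1
    simp [N1, N2, N3, h0, h1]
end
end

section
/- Let h be a real-valued C^4 function on a neighborhood of (0,0) in ℝ² with h(0,0) = 0, h_u(0,0) = 0, and h_uu(0,0) = 0 (inflexion end point condition). Define N₁, N₂, N₃ as in the extended curvature-line equation, set F(u,w,p) = N₁(u,w)p² + N₂(u,w)p + w·N₃(u,w), and let X be the Lie–Cartan vector field X(u,w,p) = (F_p, p·F_p, −(F_u + p·F_w)). Then X(0,0,0) = 0 and the Jacobian matrix of X at (0,0,0) equals [[−a₃₀, −a₂₁, −2b], [0, 0, 0], [0, 0, a₃₀]], where a₃₀ = h_uuu(0,0), a₂₁ = h_uuw(0,0), b = h_uw(0,0). In particular, if a₃₀ ≠ 0 then this Jacobian has eigenvalues −a₃₀, 0 and a₃₀, with (1,0,0) an eigenvector for the eigenvalue −a₃₀ and (b, 0, −a₃₀) an eigenvector for the eigenvalue a₃₀; i.e., the singularity of the Lie–Cartan field at an inflexion, bitransversal end point (a₃₀·b ≠ 0) is a hyperbolic saddle. -/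
noncomputable section

lemma contDiffAt_pdu {f : ℝ × ℝ → ℝ} {p : ℝ × ℝ} {m n : WithTop ℕ∞} (hf : ContDiffAt ℝ n f p)
    (hmn : m + 1 ≤ n) : ContDiffAt ℝ m (pdu f) p :=
  (hf.fderiv_right hmn).clm_apply contDiffAt_const

lemma contDiffAt_pdw {f : ℝ × ℝ → ℝ} {p : ℝ × ℝ} {m n : WithTop ℕ∞} (hf : ContDiffAt ℝ n f p)
    (hmn : m + 1 ≤ n) : ContDiffAt ℝ m (pdw f) p :=
  (hf.fderiv_right hmn).clm_apply contDiffAt_const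

/-- Projection to the base of the projectivized bundle. -/
def prUW : ℝ × ℝ × ℝ →L[ℝ] ℝ × ℝ :=
  (ContinuousLinearMap.fst ℝ ℝ (ℝ × ℝ)).prod
    ((ContinuousLinearMap.fst ℝ ℝ ℝ).comp (ContinuousLinearMap.snd ℝ ℝ (ℝ × ℝ)))

lemma prUW_apply (x : ℝ × ℝ × ℝ) : prUW x = (x.1, x.2.1) := rfl

lemma lift_hasFDerivAt {A : ℝ × ℝ → ℝ} {x : ℝ × ℝ × ℝ} (hA : DifferentiableAt ℝ A (x.1, x.2.1)) :
    HasFDerivAt (fun x : ℝ × ℝ × ℝ => A (x.1, x.2.1)) ((fderiv ℝ A (x.1, x.2.1)).comp prUW) x :=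
  HasFDerivAt.comp (g := A) (f := fun x : ℝ × ℝ × ℝ => (x.1, x.2.1)) x hA.hasFDerivAt
    prUW.hasFDerivAt

lemma has_w (x : ℝ × ℝ × ℝ) : HasFDerivAt (fun x : ℝ × ℝ × ℝ => x.2.1)
    ((ContinuousLinearMap.fst ℝ ℝ ℝ).comp (ContinuousLinearMap.snd ℝ ℝ (ℝ × ℝ))) x :=
  ((ContinuousLinearMap.fst ℝ ℝ ℝ).comp (ContinuousLinearMap.snd ℝ ℝ (ℝ × ℝ))).hasFDerivAt

lemma has_p (x : ℝ × ℝ × ℝ) : HasFDerivAt (fun x : ℝ × ℝ × ℝ => x.2.2)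
    ((ContinuousLinearMap.snd ℝ ℝ ℝ).comp (ContinuousLinearMap.snd ℝ ℝ (ℝ × ℝ))) x :=
  ((ContinuousLinearMap.snd ℝ ℝ ℝ).comp (ContinuousLinearMap.snd ℝ ℝ (ℝ × ℝ))).hasFDerivAt

lemma fderiv_F {A B C : ℝ × ℝ → ℝ} (x : ℝ × ℝ × ℝ)
    (hA : DifferentiableAt ℝ A (x.1, x.2.1)) (hB : DifferentiableAt ℝ B (x.1, x.2.1))
    (hC : DifferentiableAt ℝ C (x.1, x.2.1)) (v : ℝ × ℝ × ℝ) :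
    fderiv ℝ (fun x : ℝ × ℝ × ℝ => A (x.1, x.2.1) * x.2.2 ^ 2 + B (x.1, x.2.1) * x.2.2
      + x.2.1 * C (x.1, x.2.1)) x v =
    fderiv ℝ A (x.1, x.2.1) (v.1, v.2.1) * x.2.2 ^ 2 + A (x.1, x.2.1) * (2 * x.2.2 * v.2.2)
    + fderiv ℝ B (x.1, x.2.1) (v.1, v.2.1) * x.2.2 + B (x.1, x.2.1) * v.2.2
    + v.2.1 * C (x.1, x.2.1) + x.2.1 * fderiv ℝ C (x.1, x.2.1) (v.1, v.2.1) := by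
  have := ((((lift_hasFDerivAt hA).mul ((has_p x).pow 2)).add
    ((lift_hasFDerivAt hB).mul (has_p x))).add ((has_w x).mul (lift_hasFDerivAt hC))).fderiv
  have h2 := congrArg (fun L => L v) this
  refine Eq.trans h2 ?_
  simp [prUW_apply]
  ring

lemma fderiv_X {A B C : ℝ × ℝ → ℝ} (hA : ContDiffAt ℝ 2 A (0, 0)) (hB : ContDiffAt ℝ 2 B (0, 0))
    (hC : ContDiffAt ℝ 2 C (0, 0)) (F : ℝ × ℝ × ℝ → ℝ)
    (hF : F = fun x => A (x.1, x.2.1) * x.2.2 ^ 2 + B (x.1, x.2.1) * x.2.2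
      + x.2.1 * C (x.1, x.2.1))
    (X : ℝ × ℝ × ℝ → ℝ × ℝ × ℝ)
    (hX : X = fun x => (fderiv ℝ F x (0, 0, 1), x.2.2 * fderiv ℝ F x (0, 0, 1),
      -(fderiv ℝ F x (1, 0, 0) + x.2.2 * fderiv ℝ F x (0, 1, 0)))) :
    X (0, 0, 0) = (B (0, 0), 0, 0) ∧ ∀ v : ℝ × ℝ × ℝ, fderiv ℝ X (0, 0, 0) v =
      (2 * A (0, 0) * v.2.2 + fderiv ℝ B (0, 0) (v.1, v.2.1), v.2.2 * B (0, 0),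
       -(pdu B (0, 0) * v.2.2 + v.2.1 * pdu C (0, 0) + v.2.2 * C (0, 0))) := by
  have ev : ∀ {A : ℝ × ℝ → ℝ}, ContDiffAt ℝ 2 A (0, 0) →
      ∀ᶠ x : ℝ × ℝ × ℝ in nhds (0, 0, 0), DifferentiableAt ℝ A (x.1, x.2.1) := by
    intro A hA
    have h1 : ∀ᶠ y in nhds ((0, 0) : ℝ × ℝ), DifferentiableAt ℝ A y :=
      (hA.eventually (by simp)).mono fun y hy => hy.differentiableAt (by simp)
    exact (prUW.continuous.tendsto' (0, 0, 0) (0, 0) rfl).eventually h1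
  have hXe : X =ᶠ[nhds (0, 0, 0)] fun x =>
      (A (x.1, x.2.1) * (2 * x.2.2) + B (x.1, x.2.1),
       x.2.2 * (A (x.1, x.2.1) * (2 * x.2.2) + B (x.1, x.2.1)),
       -((pdu A (x.1, x.2.1) * x.2.2 ^ 2 + pdu B (x.1, x.2.1) * x.2.2
          + x.2.1 * pdu C (x.1, x.2.1)) +
        x.2.2 * (pdw A (x.1, x.2.1) * x.2.2 ^ 2 + pdw B (x.1, x.2.1) * x.2.2
          + (C (x.1, x.2.1) + x.2.1 * pdw C (x.1, x.2.1))))) := by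
    filter_upwards [ev hA, ev hB, ev hC] with x h1 h2 h3
    subst hF
    rw [hX]
    simp only [fderiv_F x h1 h2 h3, pdu, pdw]
    have z : ∀ L : ℝ × ℝ →L[ℝ] ℝ, L ((0 : ℝ), (0 : ℝ)) = 0 := fun L => L.map_zero
    simp only [z]
    refine Prod.ext ?_ (Prod.ext ?_ ?_) <;> simp only [] <;> ring
  have d : ∀ {A : ℝ × ℝ → ℝ}, ContDiffAt ℝ 2 A (0, 0) →
      DifferentiableAt ℝ A (((0, 0, 0) : ℝ × ℝ × ℝ).1, ((0, 0, 0) : ℝ × ℝ × ℝ).2.1) :=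
    fun hA => hA.differentiableAt (by simp)
  have du : ∀ {A : ℝ × ℝ → ℝ}, ContDiffAt ℝ 2 A (0, 0) →
      DifferentiableAt ℝ (pdu A) (((0, 0, 0) : ℝ × ℝ × ℝ).1, ((0, 0, 0) : ℝ × ℝ × ℝ).2.1) :=
    fun hA => (contDiffAt_pdu (m := 1) hA (by norm_num)).differentiableAt (by simp)
  have dw : ∀ {A : ℝ × ℝ → ℝ}, ContDiffAt ℝ 2 A (0, 0) →
      DifferentiableAt ℝ (pdw A) (((0, 0, 0) : ℝ × ℝ × ℝ).1, ((0, 0, 0) : ℝ × ℝ × ℝ).2.1) :=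
    fun hA => (contDiffAt_pdw (m := 1) hA (by norm_num)).differentiableAt (by simp)
  refine ⟨by rw [hXe.eq_of_nhds]; simp, fun v => ?_⟩
  rw [hXe.fderiv_eq]
  have p0 := has_p (0, 0, 0)
  have w0 := has_w (0, 0, 0)
  have g1 := ((lift_hasFDerivAt (d hA)).mul (p0.const_mul 2)).add (lift_hasFDerivAt (d hB))
  have g2 := p0.mul g1
  have g3 := (((((lift_hasFDerivAt (du hA)).mul (p0.pow 2)).add
    ((lift_hasFDerivAt (du hB)).mul p0)).add (w0.mul (lift_hasFDerivAt (du hC)))).add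
    (p0.mul ((((lift_hasFDerivAt (dw hA)).mul (p0.pow 2)).add
    ((lift_hasFDerivAt (dw hB)).mul p0)).add
      ((lift_hasFDerivAt (d hC)).add (w0.mul (lift_hasFDerivAt (dw hC))))))).neg
  have h2 := congrArg (fun L => L v) (g1.prodMk (g2.prodMk g3)).fderiv
  refine Eq.trans h2 ?_
  refine Prod.ext ?_ (Prod.ext ?_ ?_) <;> simp [prUW_apply] <;> ring

/-- at an inflexion end point (`a = h_uu(0,0) = 0`), the Lie–Cartan vector
field of the extended curvature-line equation vanishes at the origin, its Jacobian there is
`[[−a₃₀, −a₂₁, −2b], [0,0,0], [0,0,a₃₀]]`, and for `a₃₀ ≠ 0` this matrix has eigenvalues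
`−a₃₀, 0, a₃₀` with eigenvectors `(1,0,0)` and `(b,0,−a₃₀)` for `−a₃₀` and `a₃₀`:
a hyperbolic saddle at a bitransversal inflexion end point (`a₃₀·b ≠ 0`). -/
theorem stmt_5 (U : Set (ℝ × ℝ)) (hU : U ∈ nhds ((0, 0) : ℝ × ℝ)) (h : ℝ × ℝ → ℝ)
    (hh : ContDiffOn ℝ 4 h U) (h0 : h (0, 0) = 0) (hu0 : pdu h (0, 0) = 0)
    (huu0 : pdu (pdu h) (0, 0) = 0)
    (F : ℝ × ℝ × ℝ → ℝ)
    (hF : F = fun x => N1 h (x.1, x.2.1) * x.2.2 ^ 2 + N2 h (x.1, x.2.1) * x.2.2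
      + x.2.1 * N3 h (x.1, x.2.1))
    (X : ℝ × ℝ × ℝ → ℝ × ℝ × ℝ)
    (hX : X = fun x => (fderiv ℝ F x (0, 0, 1), x.2.2 * fderiv ℝ F x (0, 0, 1),
      -(fderiv ℝ F x (1, 0, 0) + x.2.2 * fderiv ℝ F x (0, 1, 0)))) :
    X (0, 0, 0) = 0 ∧
    (fderiv ℝ X (0, 0, 0)) (1, 0, 0) = (-(pdu (pdu (pdu h)) (0, 0)), 0, 0) ∧
    (fderiv ℝ X (0, 0, 0)) (0, 1, 0) = (-(pdw (pdu (pdu h)) (0, 0)), 0, 0) ∧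
    (fderiv ℝ X (0, 0, 0)) (0, 0, 1) =
      (-2 * pdw (pdu h) (0, 0), 0, pdu (pdu (pdu h)) (0, 0)) ∧
    (pdu (pdu (pdu h)) (0, 0) ≠ 0 →
      (let a30 := pdu (pdu (pdu h)) (0, 0)
       let a21 := pdw (pdu (pdu h)) (0, 0)
       let b := pdw (pdu h) (0, 0)
       let M : Matrix (Fin 3) (Fin 3) ℝ := !![-a30, -a21, -2 * b; 0, 0, 0; 0, 0, a30]
       M.charpoly = (Polynomial.X + Polynomial.C a30) * Polynomial.X *
         (Polynomial.X - Polynomial.C a30) ∧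
       M.mulVec ![1, 0, 0] = (-a30) • ![1, 0, 0] ∧
       M.mulVec ![b, 0, -a30] = a30 • ![b, 0, -a30])) := by
  have hc : ContDiffAt ℝ 4 h (0, 0) := hh.contDiffAt hU
  have cu : ContDiffAt ℝ 3 (pdu h) (0, 0) := contDiffAt_pdu hc (by norm_num)
  have cw : ContDiffAt ℝ 3 (pdw h) (0, 0) := contDiffAt_pdw hc (by norm_num)
  have cuu : ContDiffAt ℝ 2 (pdu (pdu h)) (0, 0) := contDiffAt_pdu cu (by norm_num)
  have cuw : ContDiffAt ℝ 2 (pdw (pdu h)) (0, 0) := contDiffAt_pdw cu (by norm_num)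
  have cww : ContDiffAt ℝ 2 (pdw (pdw h)) (0, 0) := contDiffAt_pdw cw (by norm_num)
  have c2 : ContDiffAt ℝ 2 h (0, 0) := hc.of_le (by norm_num)
  have cu2 : ContDiffAt ℝ 2 (pdu h) (0, 0) := cu.of_le (by norm_num)
  have cw2 : ContDiffAt ℝ 2 (pdw h) (0, 0) := cw.of_le (by norm_num)
  have hA : ContDiffAt ℝ 2 (N1 h) (0, 0) := by
    unfold N1; fun_prop
  have hB : ContDiffAt ℝ 2 (N2 h) (0, 0) := by
    unfold N2; fun_prop
  have hC : ContDiffAt ℝ 2 (N3 h) (0, 0) := by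
    unfold N3; fun_prop
  have e := (c2.differentiableAt (by simp)).hasFDerivAt
  have eu := (cu2.differentiableAt (by simp)).hasFDerivAt
  have ew := (cw2.differentiableAt (by simp)).hasFDerivAt
  have euu := (cuu.differentiableAt (by simp)).hasFDerivAt
  have euw := (cuw.differentiableAt (by simp)).hasFDerivAt
  have eww := (cww.differentiableAt (by simp)).hasFDerivAt
  have x1 : HasFDerivAt (fun p : ℝ × ℝ => p.1) (ContinuousLinearMap.fst ℝ ℝ ℝ) (0, 0) :=
    hasFDerivAt_fst
  have x2 : HasFDerivAt (fun p : ℝ × ℝ => p.2) (ContinuousLinearMap.snd ℝ ℝ ℝ) (0, 0) :=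
    hasFDerivAt_snd
  have k := ((x2.mul ew).sub e)
  have fB : ∀ v, fderiv ℝ (N2 h) (0, 0) v = - fderiv ℝ (pdu (pdu h)) (0, 0) v := by
    intro v
    have h2 := congrArg (fun L => L v)
      ((((x2.pow 2).mul ((eu.pow 2).const_add 1)).mul eww).sub
        ((((x1.pow 2).const_add 1).add (k.pow 2)).mul euu)).fderiv
    refine Eq.trans h2 ?_
    simp [h0, hu0, huu0]
  have fC : fderiv ℝ (N3 h) (0, 0) (1, 0) = 0 := by
    have h2 := congrArg (fun L => L (1, 0))
      (((x2.mul ((eu.pow 2).const_add 1)).mul euw).sub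
        (((eu.mul k).sub x1).mul euu)).fderiv
    refine Eq.trans h2 ?_
    simp [h0, hu0, huu0]
  have vA : N1 h (0, 0) = - pdw (pdu h) (0, 0) := by simp [N1, h0]
  have vB : N2 h (0, 0) = 0 := by simp [N2, huu0]
  have vC : N3 h (0, 0) = 0 := by simp [N3, huu0]
  obtain ⟨q0, q⟩ := fderiv_X hA hB hC F hF X hX
  have z : ∀ L : ℝ × ℝ →L[ℝ] ℝ, L ((0 : ℝ), (0 : ℝ)) = 0 := fun L => L.map_zero
  refine ⟨by rw [q0, vB]; rfl, ?_, ?_, ?_, ?_⟩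
  · rw [q]; simp [vA, vB, vC, fB, fC, pdu]
  · rw [q]; simp [vA, vB, vC, fB, fC, pdu, pdw]
  · rw [q]
    have : pdu (N2 h) (0, 0) = - pdu (pdu (pdu h)) (0, 0) := fB _
    simp [vA, vB, vC, fB, z, this]
  · intro _
    generalize pdu (pdu (pdu h)) (0, 0) = a
    generalize pdw (pdu (pdu h)) (0, 0) = a2
    generalize pdw (pdu h) (0, 0) = b
    refine ⟨?_, ?_, ?_⟩
    · simp [Matrix.charpoly, Matrix.det_fin_three]
    · ext i; fin_cases i <;> simp [Matrix.mulVec, dotProduct, Fin.sum_univ_three]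
    · ext i; fin_cases i <;> simp [Matrix.mulVec, dotProduct, Fin.sum_univ_three]; ring
end
end

section
/- Let h be a real-valued C^4 function on a neighborhood of (0,0) in ℝ² with h(0,0) = 0, h_u(0,0) = 0, h_uu(0,0) = 0, and h_uw(0,0) = 0 (umbilic–inflexion end point condition a = b = 0). Define N₁, N₂, N₃ as in the extended curvature-line equation, set F(u,w,p) = N₁(u,w)p² + N₂(u,w)p + w·N₃(u,w), and let X be the Lie–Cartan vector field X(u,w,p) = (F_p, p·F_p, −(F_u + p·F_w)). Put a₃₀ = h_uuu(0,0), a₂₁ = h_uuw(0,0), a₁₂ = h_uww(0,0). Then for every p ∈ ℝ: (i) X(0,0,p) = (0, 0, p(a₃₀ + 2a₂₁p + a₁₂p²)), so the singularities of X along the axis {u = 0, w = 0} are exactly the solutions of p(a₃₀ + 2a₂₁p + a₁₂p²) = 0; and (ii) the characteristic polynomial of the Jacobian matrix DX(0,0,p) is λ·(λ + (a₃₀ + 3a₂₁p + 2a₁₂p²))·(λ − (a₃₀ + 4a₂₁p + 3a₁₂p²)); i.e., the eigenvalues of DX(0,0,p) are λ₁(p) = −(a₃₀ + 3a₂₁p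 + 2a₁₂p²), λ₂(p) = a₃₀ + 4a₂₁p + 3a₁₂p², and λ₃ = 0. -/
noncomputable section

lemma pd_cd (f : ℝ × ℝ → ℝ) (x v : ℝ × ℝ) (n m : WithTop ℕ∞) (hf : ContDiffAt ℝ n f x)
    (hm : m + 1 ≤ n) : ContDiffAt ℝ m (fun p => fderiv ℝ f p v) x :=
  (hf.fderiv_right hm).clm_apply contDiffAt_const

lemma pd_symm (f : ℝ × ℝ → ℝ) (x : ℝ × ℝ) (hf : ContDiffAt ℝ 2 f x) :
    pdu (pdw f) x = pdw (pdu f) x := by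
  have hs := hf.isSymmSndFDerivAt (by simp)
  have hd : DifferentiableAt ℝ (fderiv ℝ f) x :=
    (hf.fderiv_right (m := 1) (by norm_num)).differentiableAt (by norm_num)
  have key : ∀ v w : ℝ × ℝ, fderiv ℝ (fun p => fderiv ℝ f p v) x w
      = fderiv ℝ (fderiv ℝ f) x w v := by
    intro v w
    have := hd.hasFDerivAt.clm_apply (hasFDerivAt_const v x)
    rw [this.fderiv]; simp
  change fderiv ℝ (fun p => fderiv ℝ f p (0, 1)) x (1, 0)
    = fderiv ℝ (fun p => fderiv ℝ f p (1, 0)) x (0, 1)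
  rw [key, key]
  exact hs _ _

lemma F_fderiv (A B C : ℝ × ℝ → ℝ) (y : ℝ × ℝ × ℝ) 
    (hA : DifferentiableAt ℝ A (y.1, y.2.1)) (hB : DifferentiableAt ℝ B (y.1, y.2.1))
    (hC : DifferentiableAt ℝ C (y.1, y.2.1)) (v : ℝ × ℝ × ℝ) :
    fderiv ℝ (fun x : ℝ × ℝ × ℝ => A (x.1, x.2.1) * x.2.2 ^ 2 + B (x.1, x.2.1) * x.2.2
      + x.2.1 * C (x.1, x.2.1)) y v =
    fderiv ℝ A (y.1, y.2.1) (v.1, v.2.1) * y.2.2 ^ 2 + A (y.1, y.2.1) * (2 * y.2.2 * v.2.2)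
    + fderiv ℝ B (y.1, y.2.1) (v.1, v.2.1) * y.2.2 + B (y.1, y.2.1) * v.2.2
    + v.2.1 * C (y.1, y.2.1) + y.2.1 * fderiv ℝ C (y.1, y.2.1) (v.1, v.2.1) := by
  have h1 : HasFDerivAt (fun x : ℝ × ℝ × ℝ => x.1) (ContinuousLinearMap.fst ℝ ℝ (ℝ × ℝ)) y :=
    hasFDerivAt_fst
  have hsnd : HasFDerivAt (fun x : ℝ × ℝ × ℝ => x.2) (ContinuousLinearMap.snd ℝ ℝ (ℝ × ℝ)) y :=
    hasFDerivAt_snd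
  have h2 := hsnd.fst
  have h3 := hsnd.snd
  have hq := h1.prodMk h2
  have a := hA.hasFDerivAt.comp y hq
  have b := hB.hasFDerivAt.comp y hq
  have c := hC.hasFDerivAt.comp y hq
  have := ((a.mul (h3.pow 2)).add (b.mul h3)).add (h2.mul c)
  have e := congrArg (fun L => L v) this.fderiv
  refine Eq.trans ?_ (e.trans ?_)
  · rfl
  · simp
    ring

lemma abstract_part (A B C : ℝ × ℝ → ℝ) (hA : ContDiffAt ℝ 2 A (0,0))
    (hB : ContDiffAt ℝ 2 B (0,0)) (hC : ContDiffAt ℝ 2 C (0,0))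
    (A0 : A (0,0) = 0) (B0 : B (0,0) = 0) (C0 : C (0,0) = 0) (a30 a21 a12 : ℝ)
    (Au : fderiv ℝ A (0,0) (1,0) = -a21) (Aw : fderiv ℝ A (0,0) (0,1) = -a12)
    (Bu : fderiv ℝ B (0,0) (1,0) = -a30) (Bw : fderiv ℝ B (0,0) (0,1) = -a21)
    (F : ℝ × ℝ × ℝ → ℝ)
    (hF : F = fun x => A (x.1, x.2.1) * x.2.2 ^ 2 + B (x.1, x.2.1) * x.2.2
      + x.2.1 * C (x.1, x.2.1))
    (X : ℝ × ℝ × ℝ → ℝ × ℝ × ℝ)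
    (hX : X = fun x => (fderiv ℝ F x (0, 0, 1), x.2.2 * fderiv ℝ F x (0, 0, 1),
      -(fderiv ℝ F x (1, 0, 0) + x.2.2 * fderiv ℝ F x (0, 1, 0)))) :
    (∀ p : ℝ, X (0, 0, p) = (0, 0, p * (a30 + 2 * a21 * p + a12 * p ^ 2))) ∧
    ∀ p : ℝ, ∃ r s : ℝ,
      fderiv ℝ X (0,0,p) (1,0,0) = (-(2*a21*p + a30), p * (-(2*a21*p + a30)), r) ∧
      fderiv ℝ X (0,0,p) (0,1,0) = (-(2*a12*p + a21), p * (-(2*a12*p + a21)), s) ∧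
      fderiv ℝ X (0,0,p) (0,0,1) = (0, 0, a30 + 4 * a21 * p + 3 * a12 * p ^ 2) := by
  have dA := hA.differentiableAt (by norm_num)
  have dB := hB.differentiableAt (by norm_num)
  have dC := hC.differentiableAt (by norm_num)
  have X0 : ∀ p : ℝ, X (0, 0, p) = (0, 0, p * (a30 + 2 * a21 * p + a12 * p ^ 2)) := by
    intro p
    have fd := F_fderiv A B C (0,0,p) dA dB dC
    rw [← hF] at fd
    have z : fderiv ℝ A (0,0) (0,0) = 0 := (fderiv ℝ A (0,0)).map_zero
    have zB : fderiv ℝ B (0,0) (0,0) = 0 := (fderiv ℝ B (0,0)).map_zero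
    rw [hX]
    simp only [fd, A0, B0, C0, Au, Aw, Bu, Bw, z, zB]
    ext <;> simp
    ring
  refine ⟨X0, fun p => ?_⟩
  have hq : ContDiffAt ℝ 2 (fun x : ℝ × ℝ × ℝ => (x.1, x.2.1)) (0,0,p) := by fun_prop
  have cA : ContDiffAt ℝ 2 (fun x : ℝ × ℝ × ℝ => A (x.1, x.2.1)) (0,0,p) :=
    ContDiffAt.comp (0,0,p) (g := A) hA hq
  have cB : ContDiffAt ℝ 2 (fun x : ℝ × ℝ × ℝ => B (x.1, x.2.1)) (0,0,p) :=
    ContDiffAt.comp (0,0,p) (g := B) hB hq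
  have cC : ContDiffAt ℝ 2 (fun x : ℝ × ℝ × ℝ => C (x.1, x.2.1)) (0,0,p) :=
    ContDiffAt.comp (0,0,p) (g := C) hC hq
  have cF : ContDiffAt ℝ 2 F (0,0,p) := by
    rw [hF]; fun_prop
  have dF : DifferentiableAt ℝ (fderiv ℝ F) (0,0,p) :=
    (cF.fderiv_right (m := 1) (by norm_num)).differentiableAt (by norm_num)
  have dv : ∀ v, DifferentiableAt ℝ (fun x => fderiv ℝ F x v) (0,0,p) := fun v =>
    dF.clm_apply (differentiableAt_const v)
  have d1 := dv (0,0,1)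
  have d2 := dv (1,0,0)
  have d3 := dv (0,1,0)
  have d22 : DifferentiableAt ℝ (fun x : ℝ × ℝ × ℝ => x.2.2) (0,0,p) := by fun_prop
  have dX3 : DifferentiableAt ℝ (fun x : ℝ × ℝ × ℝ => 
    -(fderiv ℝ F x (1, 0, 0) + x.2.2 * fderiv ℝ F x (0, 1, 0))) (0,0,p) :=
    (d2.add (d22.mul d3)).neg
  -- the first component near the axis
  have ev : (fun x => fderiv ℝ F x (0,0,1)) =ᶠ[nhds ((0:ℝ),(0:ℝ),p)]
      fun x => 2 * x.2.2 * A (x.1, x.2.1) + B (x.1, x.2.1) := by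
    have t : Filter.Tendsto (fun x : ℝ × ℝ × ℝ => (x.1, x.2.1)) (nhds ((0:ℝ),(0:ℝ),p))
        (nhds ((0:ℝ),(0:ℝ))) := hq.continuousAt
    filter_upwards [t.eventually (hA.eventually (by simp)), t.eventually (hB.eventually (by simp)),
      t.eventually (hC.eventually (by simp))] with x xa xb xc
    have fd := F_fderiv A B C x (xa.differentiableAt (by norm_num))
      (xb.differentiableAt (by norm_num)) (xc.differentiableAt (by norm_num)) (0,0,1)
    have z : ∀ G : ℝ × ℝ → ℝ, fderiv ℝ G (x.1, x.2.1) (0,0) = 0 :=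
      fun G => (fderiv ℝ G (x.1, x.2.1)).map_zero
    rw [← hF] at fd
    rw [fd]; simp only [z]; ring
  have hq1 : HasFDerivAt (fun x : ℝ × ℝ × ℝ => (x.1, x.2.1))
      ((ContinuousLinearMap.fst ℝ ℝ (ℝ × ℝ)).prod
        ((ContinuousLinearMap.fst ℝ ℝ ℝ).comp (ContinuousLinearMap.snd ℝ ℝ (ℝ × ℝ)))) (0,0,p) :=
    hasFDerivAt_fst.prodMk (HasFDerivAt.fst hasFDerivAt_snd)
  have h22 : HasFDerivAt (fun x : ℝ × ℝ × ℝ => x.2.2)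
      ((ContinuousLinearMap.snd ℝ ℝ ℝ).comp (ContinuousLinearMap.snd ℝ ℝ (ℝ × ℝ))) (0,0,p) :=
    HasFDerivAt.snd hasFDerivAt_snd
  have e1 : ∀ v : ℝ × ℝ × ℝ, fderiv ℝ (fun x => fderiv ℝ F x (0,0,1)) (0,0,p) v =
      2 * p * fderiv ℝ A (0,0) (v.1, v.2.1) + fderiv ℝ B (0,0) (v.1, v.2.1) := by
    intro v
    rw [ev.fderiv_eq]
    have a := HasFDerivAt.comp (g := A) (0,0,p) dA.hasFDerivAt hq1
    have b := HasFDerivAt.comp (g := B) (0,0,p) dB.hasFDerivAt hq1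
    have := ((h22.const_mul 2).mul a).add b
    have e := congrArg (fun L => L v) this.fderiv
    refine Eq.trans ?_ (e.trans ?_)
    · rfl
    · simp [A0]
  have p0 : fderiv ℝ F (0,0,p) (0,0,1) = 0 := by
    have := congrArg Prod.fst (X0 p)
    rw [hX] at this
    exact this
  have key : ∀ v : ℝ × ℝ × ℝ, fderiv ℝ X (0,0,p) v =
      (fderiv ℝ (fun x => fderiv ℝ F x (0,0,1)) (0,0,p) v,
       p * fderiv ℝ (fun x => fderiv ℝ F x (0,0,1)) (0,0,p) v,
       fderiv ℝ (fun x : ℝ × ℝ × ℝ => 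
        -(fderiv ℝ F x (1, 0, 0) + x.2.2 * fderiv ℝ F x (0, 1, 0))) (0,0,p) v) := by
    intro v
    have := d1.hasFDerivAt.prodMk ((h22.mul d1.hasFDerivAt).prodMk dX3.hasFDerivAt)
    have e := congrArg (fun L => L v) this.fderiv
    refine Eq.trans ?_ (e.trans ?_)
    · rw [hX]; rfl
    · simp [p0]
  have dX : DifferentiableAt ℝ X (0,0,p) := by
    rw [hX]; exact d1.prodMk ((d22.mul d1).prodMk dX3)
  refine ⟨(fderiv ℝ X (0,0,p) (1,0,0)).2.2, (fderiv ℝ X (0,0,p) (0,1,0)).2.2, ?_, ?_, ?_⟩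
  · rw [key, e1]; simp only [Au, Bu]
    refine Prod.ext (by ring) (Prod.ext (by ring) rfl)
  · rw [key, e1]; simp only [Aw, Bw]
    refine Prod.ext (by ring) (Prod.ext (by ring) rfl)
  · have hl : HasDerivAt (fun t : ℝ => ((0:ℝ),(0:ℝ),t)) (0,0,1) p :=
      (hasDerivAt_const p 0).prodMk ((hasDerivAt_const p 0).prodMk (hasDerivAt_id p))
    have c := HasFDerivAt.comp_hasDerivAt (l := X) p dX.hasFDerivAt hl
    have c2 : X ∘ (fun t : ℝ => ((0:ℝ),(0:ℝ),t)) =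
      fun p => (0, 0, p * (a30 + 2 * a21 * p + a12 * p ^ 2)) := funext X0
    rw [c2] at c
    have hp := hasDerivAt_id p
    have i := hp.mul (((hp.const_mul (2*a21)).const_add a30).add ((hp.pow 2).const_mul a12))
    have j := (hasDerivAt_const p (0:ℝ)).prodMk ((hasDerivAt_const p (0:ℝ)).prodMk i)
    rw [c.unique j]
    refine Prod.ext rfl (Prod.ext rfl ?_)
    simp
    ring

/-- at an umbilic–inflexion end point (`a = b = 0`), the Lie–Cartan vector
field of the extended curvature-line equation vanishes along the projective line exactly at
the roots of `p(a₃₀ + 2a₂₁p + a₁₂p²)`, and the characteristic polynomial of its Jacobian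
`DX(0,0,p)` is `λ(λ + (a₃₀ + 3a₂₁p + 2a₁₂p²))(λ − (a₃₀ + 4a₂₁p + 3a₁₂p²))`. -/
theorem stmt_6 (U : Set (ℝ × ℝ)) (hU : U ∈ nhds ((0, 0) : ℝ × ℝ)) (h : ℝ × ℝ → ℝ)
    (hh : ContDiffOn ℝ 4 h U) (h0 : h (0, 0) = 0) (hu0 : pdu h (0, 0) = 0)
    (huu0 : pdu (pdu h) (0, 0) = 0) (huw0 : pdw (pdu h) (0, 0) = 0)
    (F : ℝ × ℝ × ℝ → ℝ)
    (hF : F = fun x => N1 h (x.1, x.2.1) * x.2.2 ^ 2 + N2 h (x.1, x.2.1) * x.2.2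
      + x.2.1 * N3 h (x.1, x.2.1))
    (X : ℝ × ℝ × ℝ → ℝ × ℝ × ℝ)
    (hX : X = fun x => (fderiv ℝ F x (0, 0, 1), x.2.2 * fderiv ℝ F x (0, 0, 1),
      -(fderiv ℝ F x (1, 0, 0) + x.2.2 * fderiv ℝ F x (0, 1, 0)))) :
    let a30 := pdu (pdu (pdu h)) (0, 0)
    let a21 := pdw (pdu (pdu h)) (0, 0)
    let a12 := pdw (pdw (pdu h)) (0, 0)
    ∀ p : ℝ,
      (X (0, 0, p) = (0, 0, p * (a30 + 2 * a21 * p + a12 * p ^ 2)) ∧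
       (X (0, 0, p) = 0 ↔ p * (a30 + 2 * a21 * p + a12 * p ^ 2) = 0)) ∧
      (let c1 := fderiv ℝ X ((0 : ℝ), (0 : ℝ), p) (1, 0, 0)
       let c2 := fderiv ℝ X ((0 : ℝ), (0 : ℝ), p) (0, 1, 0)
       let c3 := fderiv ℝ X ((0 : ℝ), (0 : ℝ), p) (0, 0, 1)
       let J : Matrix (Fin 3) (Fin 3) ℝ :=
         !![c1.1, c2.1, c3.1; c1.2.1, c2.2.1, c3.2.1; c1.2.2, c2.2.2, c3.2.2]
       J.charpoly =
         Polynomial.X * (Polynomial.X + Polynomial.C (a30 + 3 * a21 * p + 2 * a12 * p ^ 2))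
           * (Polynomial.X - Polynomial.C (a30 + 4 * a21 * p + 3 * a12 * p ^ 2))) := by
  intro a30 a21 a12
  have ch : ContDiffAt ℝ 4 h (0,0) := hh.contDiffAt hU
  have cu : ContDiffAt ℝ 3 (pdu h) (0,0) := pd_cd h _ _ 4 3 ch (by norm_num)
  have cw : ContDiffAt ℝ 3 (pdw h) (0,0) := pd_cd h _ _ 4 3 ch (by norm_num)
  have cuu : ContDiffAt ℝ 2 (pdu (pdu h)) (0,0) := pd_cd _ _ _ 3 2 cu (by norm_num)
  have cuw : ContDiffAt ℝ 2 (pdw (pdu h)) (0,0) := pd_cd _ _ _ 3 2 cu (by norm_num)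
  have cww : ContDiffAt ℝ 2 (pdw (pdw h)) (0,0) := pd_cd _ _ _ 3 2 cw (by norm_num)
  have ch2 : ContDiffAt ℝ 2 h (0,0) := ch.of_le (by norm_num)
  have cu2 : ContDiffAt ℝ 2 (pdu h) (0,0) := cu.of_le (by norm_num)
  have cw2 : ContDiffAt ℝ 2 (pdw h) (0,0) := cw.of_le (by norm_num)
  have c1 : ContDiffAt ℝ 2 (N1 h) (0,0) := by unfold N1; fun_prop
  have c2 : ContDiffAt ℝ 2 (N2 h) (0,0) := by unfold N2; fun_prop
  have c3 : ContDiffAt ℝ 2 (N3 h) (0,0) := by unfold N3; fun_prop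
  have sy : pdu (pdw (pdu h)) (0,0) = a21 := pd_symm _ _ cu2
  have hf1 : HasFDerivAt (fun x : ℝ × ℝ => x.1) (ContinuousLinearMap.fst ℝ ℝ ℝ) (0,0) :=
    hasFDerivAt_fst
  have hf2 : HasFDerivAt (fun x : ℝ × ℝ => x.2) (ContinuousLinearMap.snd ℝ ℝ ℝ) (0,0) :=
    hasFDerivAt_snd
  have dh := (ch2.differentiableAt (by norm_num)).hasFDerivAt
  have du := (cu2.differentiableAt (by norm_num)).hasFDerivAt
  have dw := (cw2.differentiableAt (by norm_num)).hasFDerivAt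
  have duu := (cuu.differentiableAt (by norm_num)).hasFDerivAt
  have duw := (cuw.differentiableAt (by norm_num)).hasFDerivAt
  have dww := (cww.differentiableAt (by norm_num)).hasFDerivAt
  have dK := (hf2.mul dw).sub dh
  have dE := ((hf1.pow 2).const_add 1).add (dK.pow 2)
  have D1 : ∀ v, fderiv ℝ (N1 h) (0,0) v = - fderiv ℝ (pdw (pdu h)) (0,0) v := by
    intro v
    have := ((hf2.mul dww).mul ((du.mul dK).sub hf1)).sub (dE.mul duw)
    have e := congrArg (fun L => L v) this.fderiv
    refine Eq.trans ?_ (e.trans ?_)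
    · rfl
    · simp [h0, hu0, huw0]
  have D2 : ∀ v, fderiv ℝ (N2 h) (0,0) v = - fderiv ℝ (pdu (pdu h)) (0,0) v := by
    intro v
    have := (((hf2.pow 2).mul ((du.pow 2).const_add 1)).mul dww).sub (dE.mul duu)
    have e := congrArg (fun L => L v) this.fderiv
    refine Eq.trans ?_ (e.trans ?_)
    · rfl
    · simp [h0, hu0, huu0]
  obtain ⟨X0, HX⟩ := abstract_part (N1 h) (N2 h) (N3 h) c1 c2 c3 (by simp [N1, huw0])
    (by simp [N2, huu0]) (by simp [N3, huu0]) a30 a21 a12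
    ((D1 _).trans (congrArg Neg.neg sy)) (D1 _) (D2 _) (D2 _) F hF X hX
  intro p
  refine ⟨⟨X0 p, by rw [X0 p]; simp⟩, ?_⟩
  obtain ⟨r, s, e1, e2, e3⟩ := HX p
  rw [e1, e2, e3]
  simp only [Matrix.charpoly, Matrix.det_fin_three, Matrix.charmatrix]
  simp
  have k2 : (Polynomial.C (2:ℝ)) = 2 := rfl
  have k3 : (Polynomial.C (3:ℝ)) = 3 := rfl
  have k4 : (Polynomial.C (4:ℝ)) = 4 := rfl
  rw [k2, k3, k4]
  ring
end
end

section
/- Let a₃₀, a₂₁, a₁₂ be real numbers with a₃₀ ≠ 0 and a₂₁² − a₁₂a₃₀ ≠ 0, and define λ₁(p) = −(a₃₀ + 3a₂₁p + 2a₁₂p²) and λ₂(p) = a₃₀ + 4a₂₁p + 3a₁₂p². Then: (i) λ₁(0)·λ₂(0) = −a₃₀² < 0; and (ii) for every real root p of a₁₂p² + 2a₂₁p + a₃₀ = 0, one has λ₁(p) = a₃₀ + a₂₁p, λ₂(p) = −2(a₃₀ + a₂₁p), a₃₀ + a₂₁p ≠ 0, and hence λ₁(p)·λ₂(p) = −2(a₃₀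 + a₂₁p)² < 0. Consequently every singular point of the associated Lie–Cartan field along the projective line has two real nonzero eigenvalues of opposite signs (a hyperbolic saddle). -/
/-- the nonzero eigenvalues `λ₁, λ₂` of the Lie–Cartan field at each
singularity along the projective line have opposite signs (hyperbolic saddles). -/
theorem stmt_8 (a30 a21 a12 : ℝ) (h30 : a30 ≠ 0) (hd : a21 ^ 2 - a12 * a30 ≠ 0)
    (lam1 lam2 : ℝ → ℝ)
    (h1 : lam1 = fun p => -(a30 + 3 * a21 * p + 2 * a12 * p ^ 2))
    (h2 : lam2 = fun p => a30 + 4 * a21 * p + 3 * a12 * p ^ 2) :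
    (lam1 0 * lam2 0 = -a30 ^ 2 ∧ lam1 0 * lam2 0 < 0) ∧
    ∀ p : ℝ, a12 * p ^ 2 + 2 * a21 * p + a30 = 0 →
      lam1 p = a30 + a21 * p ∧ lam2 p = -2 * (a30 + a21 * p) ∧
      a30 + a21 * p ≠ 0 ∧
      lam1 p * lam2 p = -2 * (a30 + a21 * p) ^ 2 ∧
      lam1 p * lam2 p < 0 := by
  subst h1 h2
  refine ⟨⟨by ring, ?_⟩, ?_⟩
  · have : 0 < a30 ^ 2 := by positivity
    ring_nf
    linarith
  · intro p hp
    have e1 : -(a30 + 3 * a21 * p + 2 * a12 * p ^ 2) = a30 + a21 * p := by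
      linear_combination (-2) * hp
    have e2 : a30 + 4 * a21 * p + 3 * a12 * p ^ 2 = -2 * (a30 + a21 * p) := by
      linear_combination 3 * hp
    have hne : a30 + a21 * p ≠ 0 := by
      intro h
      have hp0 : p ≠ 0 := by
        rintro rfl
        apply h30
        linarith
      have h3 : a12 * p + a21 = 0 := by
        have : p * (a12 * p + a21) = 0 := by linear_combination hp - h
        exact (mul_eq_zero.mp this).resolve_left hp0
      apply hd
      linear_combination a21 * h3 - a12 * h
    have hpos : 0 < (a30 + a21 * p) ^ 2 := by positivity
    refine ⟨e1, e2, hne, ?_, ?_⟩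
    · simp only [e1, e2]
      ring
    · simp only [e1, e2]
      nlinarith
end

section
/- Let a and a₃₀ be real numbers and for q ∈ ℝ consider the 3×3 real matrix M(q) = [[ (1/2)q·a₃₀(2a − a₃₀q), −2qa(a − a₃₀q), 0], [ (1/2)a₃₀(2a − a₃₀q), −2a(a − a₃₀q), 0], [0, 0, 3a² − 4a·a₃₀q + (3/4)a₃₀²q²]] (where the bottom-left entries may be arbitrary reals A₃₁, A₃₂ without affecting the claim, since the (1,3) and (2,3) entries vanish). Then the eigenvalues of M(q) are λ₁(q) = −2a² + 3a·a₃₀q − (1/2)a₃₀²q², λ₂(q) = 3a² − 4a·a₃₀q + (3/4)a₃₀²q², and 0. Moreover, if a ≠ 0 and a₃₀ ≠ 0, then at the three values q = 0, q = 2a/a₃₀, q = 6a/a₃₀ (the solutions of q(2a − a₃₀q)(6a − a₃₀q) = 0) one has respectively (λ₁, λ₂) = (−2a², 3a²), (2a², −2a²), (−2a², 6a²); in each case λ₁·λ₂ < 0, so each singular point is a hyperbolic saddle. -/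
lemma charpoly_aux (x p r A B s : ℝ) :
    (!![x * p, x * r, 0; p, r, 0; A, B, s] : Matrix (Fin 3) (Fin 3) ℝ).charpoly =
      Polynomial.X * (Polynomial.X - Polynomial.C (x * p + r)) *
        (Polynomial.X - Polynomial.C s) := by
  simp [Matrix.charpoly, Matrix.det_fin_three, Matrix.charmatrix_apply]
  ring

/-- the Jacobian matrix of the Lie–Cartan field along the projective line at
a saddle critical end point has eigenvalues `λ₁(q), λ₂(q), 0` (independently of the
bottom-left entries `A₃₁, A₃₂`), and at the three singular values
`q = 0, 2a/a₃₀, 6a/a₃₀` one has `λ₁·λ₂ < 0`: hyperbolic saddles. -/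
theorem stmt_11 (a a30 A31 A32 : ℝ)
    (M : ℝ → Matrix (Fin 3) (Fin 3) ℝ)
    (hM : M = fun q =>
      !![(1 / 2) * q * a30 * (2 * a - a30 * q), -2 * q * a * (a - a30 * q), 0;
         (1 / 2) * a30 * (2 * a - a30 * q), -2 * a * (a - a30 * q), 0;
         A31, A32, 3 * a ^ 2 - 4 * a * a30 * q + (3 / 4) * a30 ^ 2 * q ^ 2])
    (lam1 lam2 : ℝ → ℝ)
    (h1 : lam1 = fun q => -2 * a ^ 2 + 3 * a * a30 * q - (1 / 2) * a30 ^ 2 * q ^ 2)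
    (h2 : lam2 = fun q => 3 * a ^ 2 - 4 * a * a30 * q + (3 / 4) * a30 ^ 2 * q ^ 2) :
    (∀ q : ℝ, (M q).charpoly =
      Polynomial.X * (Polynomial.X - Polynomial.C (lam1 q)) *
        (Polynomial.X - Polynomial.C (lam2 q))) ∧
    (a ≠ 0 → a30 ≠ 0 →
      (∀ q : ℝ, q * (2 * a - a30 * q) * (6 * a - a30 * q) = 0 ↔
        q = 0 ∨ q = 2 * a / a30 ∨ q = 6 * a / a30) ∧
      lam1 0 = -2 * a ^ 2 ∧ lam2 0 = 3 * a ^ 2 ∧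
      lam1 (2 * a / a30) = 2 * a ^ 2 ∧ lam2 (2 * a / a30) = -2 * a ^ 2 ∧
      lam1 (6 * a / a30) = -2 * a ^ 2 ∧ lam2 (6 * a / a30) = 6 * a ^ 2 ∧
      lam1 0 * lam2 0 < 0 ∧
      lam1 (2 * a / a30) * lam2 (2 * a / a30) < 0 ∧
      lam1 (6 * a / a30) * lam2 (6 * a / a30) < 0) := by
  constructor
  · intro q
    have h := charpoly_aux q ((1 / 2) * a30 * (2 * a - a30 * q)) (-2 * a * (a - a30 * q)) A31 A32
      (3 * a ^ 2 - 4 * a * a30 * q + (3 / 4) * a30 ^ 2 * q ^ 2)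
    have e1 : (1 / 2) * q * a30 * (2 * a - a30 * q)
        = q * ((1 / 2) * a30 * (2 * a - a30 * q)) := by ring
    have e2 : -2 * q * a * (a - a30 * q) = q * (-2 * a * (a - a30 * q)) := by ring
    have e3 : -2 * a ^ 2 + 3 * a * a30 * q - (1 / 2) * a30 ^ 2 * q ^ 2
        = q * ((1 / 2) * a30 * (2 * a - a30 * q)) + -2 * a * (a - a30 * q) := by ring
    subst hM h1 h2
    beta_reduce
    rw [e1, e2, e3]
    exact h
  · intro ha h30
    have k1 : lam1 0 = -2 * a ^ 2 := by rw [h1]; ring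
    have k2 : lam2 0 = 3 * a ^ 2 := by rw [h2]; ring
    have k3 : lam1 (2 * a / a30) = 2 * a ^ 2 := by rw [h1]; field_simp; ring
    have k4 : lam2 (2 * a / a30) = -2 * a ^ 2 := by rw [h2]; field_simp; ring
    have k5 : lam1 (6 * a / a30) = -2 * a ^ 2 := by rw [h1]; field_simp; ring
    have k6 : lam2 (6 * a / a30) = 6 * a ^ 2 := by rw [h2]; field_simp; ring
    have hp : 0 < a ^ 2 := by positivity
    refine ⟨?_, k1, k2, k3, k4, k5, k6, ?_, ?_, ?_⟩
    · intro q
      rw [mul_eq_zero, mul_eq_zero, or_assoc, eq_div_iff h30, eq_div_iff h30]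
      refine or_congr Iff.rfl (or_congr ?_ ?_) <;>
        constructor <;> intro h <;> linarith
    · rw [k1, k2]; nlinarith
    · rw [k3, k4]; nlinarith
    · rw [k5, k6]; nlinarith
end

section
/- Let h be a real-valued C^3 function on a neighborhood of (0,0) in ℝ² with h(0,0) = 0, h_u(0,0) = 0, h_v(0,0) = 0, h_uu(0,0) = 0, h_uv(0,0) = −a with a ≠ 0, and h_vv(0,0) = 2 (so that the quadratic part of h at the origin is (−au + v)v, a nondegenerate saddle). Let ψ be a real-valued C^3 function on a neighborhood of 0 in ℝ with ψ(0) = 0 and ψ'(0) = a such that h(u, ψ(u)) = 0 for all u near 0 (ψ parametrizes the branch of h⁻¹(0) tangent to the line v = au). Then ψ''(0) = −(a₃₀ + 3a·a₂₁ + 3a²·a₁₂ + a³·a₀₃)/(3a), where a₃₀ = h_uuu(0,0), a₂₁ = h_uuv(0,0), a₁₂ = h_uvv(0,0), a₀₃ = h_vvv(0,0). -/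
noncomputable section

/-- Partial derivative with respect to the second variable `v`. -/
def pdv (f : ℝ × ℝ → ℝ) (p : ℝ × ℝ) : ℝ := fderiv ℝ f p (0, 1)

theorem aux_pdu {f : ℝ × ℝ → ℝ} {p : ℝ × ℝ} {n m : WithTop ℕ∞} (hf : ContDiffAt ℝ n f p)
    (hm : m + 1 ≤ n) : ContDiffAt ℝ m (pdu f) p :=
  (hf.fderiv_right hm).clm_apply contDiffAt_const

theorem aux_pdv {f : ℝ × ℝ → ℝ} {p : ℝ × ℝ} {n m : WithTop ℕ∞} (hf : ContDiffAt ℝ n f p)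
    (hm : m + 1 ≤ n) : ContDiffAt ℝ m (pdv f) p :=
  (hf.fderiv_right hm).clm_apply contDiffAt_const

theorem aux_symm {f : ℝ × ℝ → ℝ} {p : ℝ × ℝ} (hf : ContDiffAt ℝ 2 f p) :
    pdu (pdv f) p = pdv (pdu f) p := by
  have hs : IsSymmSndFDerivAt ℝ f p := hf.isSymmSndFDerivAt (by simp)
  have hd : DifferentiableAt ℝ (fderiv ℝ f) p :=
    (hf.fderiv_right (m := 1) (by norm_num)).differentiableAt (by norm_num)
  have key : ∀ w z : ℝ × ℝ,
      fderiv ℝ (fun q => fderiv ℝ f q w) p z = fderiv ℝ (fderiv ℝ f) p z w := by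
    intro w z
    rw [fderiv_clm_apply hd (differentiableAt_const w)]
    simp
  have h1 : pdu (pdv f) p = fderiv ℝ (fderiv ℝ f) p (1, 0) (0, 1) := key _ _
  have h2 : pdv (pdu f) p = fderiv ℝ (fderiv ℝ f) p (0, 1) (1, 0) := key _ _
  rw [h1, h2]
  exact hs _ _

theorem aux_chain {f : ℝ × ℝ → ℝ} {ψ : ℝ → ℝ} {u : ℝ} (hf : DifferentiableAt ℝ f (u, ψ u))
    (hψ : DifferentiableAt ℝ ψ u) :
    HasDerivAt (fun t => f (t, ψ t)) (pdu f (u, ψ u) + pdv f (u, ψ u) * deriv ψ u) u := by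
  have h1 : HasDerivAt (fun t => (t, ψ t)) ((1 : ℝ), deriv ψ u) u :=
    (hasDerivAt_id u).prodMk hψ.hasDerivAt
  have h2 := hf.hasFDerivAt.comp_hasDerivAt u h1
  have e : ((1 : ℝ), deriv ψ u) = (1, 0) + deriv ψ u • ((0 : ℝ), (1 : ℝ)) := by simp
  have e2 : fderiv ℝ f (u, ψ u) (1, deriv ψ u)
      = pdu f (u, ψ u) + pdv f (u, ψ u) * deriv ψ u := by
    rw [e, map_add, map_smul]
    simp [pdu, pdv, mul_comm]
  rw [e2] at h2
  exact h2

/-- at a saddle critical end point with quadratic part `(−au + v)v`, the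
branch of `h⁻¹(0)` tangent to `v = au` satisfies
`ψ''(0) = −(a₃₀ + 3a·a₂₁ + 3a²·a₁₂ + a³·a₀₃)/(3a)`. -/
theorem stmt_13 (U : Set (ℝ × ℝ)) (hU : U ∈ nhds ((0, 0) : ℝ × ℝ)) (h : ℝ × ℝ → ℝ)
    (hh : ContDiffOn ℝ 3 h U) (a : ℝ) (ha : a ≠ 0)
    (h00 : h (0, 0) = 0) (hu0 : pdu h (0, 0) = 0) (hv0 : pdv h (0, 0) = 0)
    (huu : pdu (pdu h) (0, 0) = 0) (huv : pdv (pdu h) (0, 0) = -a)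
    (hvv : pdv (pdv h) (0, 0) = 2)
    (ψ : ℝ → ℝ) (V : Set ℝ) (hV : V ∈ nhds (0 : ℝ))
    (hψC : ContDiffOn ℝ 3 ψ V) (hψ0 : ψ 0 = 0) (hψ'0 : deriv ψ 0 = a)
    (hbr : ∀ u ∈ V, h (u, ψ u) = 0) :
    deriv (deriv ψ) 0 =
      -(pdu (pdu (pdu h)) (0, 0) + 3 * a * pdv (pdu (pdu h)) (0, 0)
          + 3 * a ^ 2 * pdv (pdv (pdu h)) (0, 0)
          + a ^ 3 * pdv (pdv (pdv h)) (0, 0)) / (3 * a) := by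
  have hc0 : ContDiffAt ℝ 3 h (0, 0) := hh.contDiffAt hU
  have hψc0 : ContDiffAt ℝ 3 ψ 0 := hψC.contDiffAt hV
  have ehp : ∀ᶠ p in nhds ((0, 0) : ℝ × ℝ), ContDiffAt ℝ 3 h p :=
    hc0.eventually (by simp)
  have eψ : ∀ᶠ u in nhds (0 : ℝ), ContDiffAt ℝ 3 ψ u := hψc0.eventually (by simp)
  have hcont : Filter.Tendsto (fun u : ℝ => (u, ψ u)) (nhds 0) (nhds (0, 0)) := by
    have : ContinuousAt (fun u : ℝ => (u, ψ u)) 0 :=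
      continuousAt_id.prodMk hψc0.continuousAt
    have h2 := this.tendsto
    rwa [hψ0] at h2
  have eh : ∀ᶠ u in nhds (0 : ℝ), ContDiffAt ℝ 3 h (u, ψ u) := hcont.eventually ehp
  have dψ1 : ∀ {u : ℝ}, ContDiffAt ℝ 3 ψ u → ContDiffAt ℝ 2 (deriv ψ) u := fun hx =>
    (hx.fderiv_right (m := 2) (by norm_num)).clm_apply contDiffAt_const
  have dψ2 : ∀ {u : ℝ}, ContDiffAt ℝ 3 ψ u → ContDiffAt ℝ 1 (deriv (deriv ψ)) u := fun hx =>
    ((dψ1 hx).fderiv_right (m := 1) (by norm_num)).clm_apply contDiffAt_const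
  have e0 : (fun u => h (u, ψ u)) =ᶠ[nhds 0] fun _ => 0 := by
    filter_upwards [hV] with u hu using hbr u hu
  have e1 : (fun u => pdu h (u, ψ u) + pdv h (u, ψ u) * deriv ψ u) =ᶠ[nhds 0] fun _ => 0 := by
    filter_upwards [e0.eventuallyEq_nhds, eh, eψ] with u hu h1 h2
    have := (aux_chain (h1.differentiableAt (by norm_num))
      (h2.differentiableAt (by norm_num))).deriv
    rw [← this, hu.deriv_eq]
    simp
  have e2 : (fun u => (pdu (pdu h) (u, ψ u) + pdv (pdu h) (u, ψ u) * deriv ψ u) +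
      ((pdv (pdu h) (u, ψ u) + pdv (pdv h) (u, ψ u) * deriv ψ u) * deriv ψ u
        + pdv h (u, ψ u) * deriv (deriv ψ) u)) =ᶠ[nhds 0] fun _ => 0 := by
    filter_upwards [e1.eventuallyEq_nhds, eh, eψ] with u hu h1 h2
    have d := h2.differentiableAt (by norm_num)
    have hu' : ContDiffAt ℝ 2 (pdu h) (u, ψ u) := aux_pdu h1 (by norm_num)
    have hv' : ContDiffAt ℝ 2 (pdv h) (u, ψ u) := aux_pdv h1 (by norm_num)
    have k1 := aux_chain (hu'.differentiableAt (by norm_num)) d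
    have k2 := aux_chain (hv'.differentiableAt (by norm_num)) d
    have k3 := ((dψ1 h2).differentiableAt (by norm_num)).hasDerivAt
    have := (k1.add (k2.mul k3)).deriv
    rw [aux_symm (h1.of_le (by norm_num))] at this
    rw [← this]
    refine (Filter.EventuallyEq.deriv_eq (f := fun _ => 0) hu).trans ?_
    simp
  have d := hψc0.differentiableAt (by norm_num)
  have hc0' : ContDiffAt ℝ 3 h (0, ψ 0) := by rw [hψ0]; exact hc0
  have hu' : ContDiffAt ℝ 2 (pdu h) (0, ψ 0) := aux_pdu hc0' (by norm_num)
  have hv' : ContDiffAt ℝ 2 (pdv h) (0, ψ 0) := aux_pdv hc0' (by norm_num)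
  have huu' : ContDiffAt ℝ 1 (pdu (pdu h)) (0, ψ 0) := aux_pdu hu' (by norm_num)
  have huv' : ContDiffAt ℝ 1 (pdv (pdu h)) (0, ψ 0) := aux_pdv hu' (by norm_num)
  have hvv' : ContDiffAt ℝ 1 (pdv (pdv h)) (0, ψ 0) := aux_pdv hv' (by norm_num)
  have kv := aux_chain (hv'.differentiableAt (by norm_num)) d
  have kuu := aux_chain (huu'.differentiableAt (by norm_num)) d
  have kuv := aux_chain (huv'.differentiableAt (by norm_num)) d
  have kvv := aux_chain (hvv'.differentiableAt (by norm_num)) d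
  have k1 := ((dψ1 hψc0).differentiableAt (by norm_num)).hasDerivAt
  have k2 := ((dψ2 hψc0).differentiableAt (by norm_num)).hasDerivAt
  have K := ((kuu.add (kuv.mul k1)).add
    (((kuv.add (kvv.mul k1)).mul k1).add (kv.mul k2))).deriv
  have K0 := (Filter.EventuallyEq.deriv_eq (f := fun _ => 0) e2)
  have K1 := K.symm.trans K0
  have s1 : pdu (pdv h) (0, 0) = pdv (pdu h) (0, 0) := aux_symm (hc0.of_le (by norm_num))
  have s2 : pdu (pdv (pdu h)) (0, 0) = pdv (pdu (pdu h)) (0, 0) := by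
    rw [hψ0] at hu'; exact aux_symm hu'
  have s3 : pdu (pdv (pdv h)) (0, 0) = pdv (pdv (pdu h)) (0, 0) := by
    rw [hψ0] at hv'
    rw [aux_symm hv']
    have : pdu (pdv h) =ᶠ[nhds (0, 0)] pdv (pdu h) := by
      filter_upwards [ehp] with p hp using aux_symm (hp.of_le (by norm_num))
    unfold pdv at this ⊢
    rw [this.fderiv_eq]
  simp only [Pi.add_apply, Pi.mul_apply, hψ0, hψ'0, s1, s2, s3, huv, hvv, hv0, deriv_const] at K1
  rw [eq_div_iff (by simpa using ha)]
  linear_combination K1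
end
end

section
/- Let h be a real-valued C^1 function on an open subset of ℝ² with h(u,v) > 0, and define the critical end chart β(u,v) = (u/h(u,v), v/h(u,v), 1/h(u,v)) ∈ ℝ³. Then the cross product of the partial derivatives satisfies β_u × β_v = (h_u, h_v, h − u·h_u − v·h_v)/h³, and hence EG − F² = |β_u × β_v|² = (h_u² + h_v² + (h − u·h_u − v·h_v)²)/h⁶; in particular β is an immersion at every point where (h_u, h_v, h − u·h_u − v·h_v) ≠ (0,0,0). -/
noncomputable section

/-- Partial derivative (vector valued) with respect to the second variable. -/
def vdv (f : ℝ × ℝ → Fin 3 → ℝ) (p : ℝ × ℝ) : Fin 3 → ℝ := fderiv ℝ f p (0, 1)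

/-- cross product of the partial derivatives of the critical end chart
`β(u,v) = (u/h, v/h, 1/h)`, the identity `EG − F² = |β_u × β_v|²`, and the immersion
property where `(h_u, h_v, h − u·h_u − v·h_v) ≠ 0`. -/
theorem stmt_15 (U : Set (ℝ × ℝ)) (hU : IsOpen U) (h : ℝ × ℝ → ℝ)
    (hh : ContDiffOn ℝ 1 h U) (hpos : ∀ p ∈ U, 0 < h p)
    (β : ℝ × ℝ → Fin 3 → ℝ)
    (hβ : ∀ p ∈ U, β p = ![p.1 / h p, p.2 / h p, 1 / h p]) :
    ∀ p ∈ U,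
      cross3 (vdu β p) (vdv β p) =
        ![pdu h p / h p ^ 3, pdv h p / h p ^ 3,
          (h p - p.1 * pdu h p - p.2 * pdv h p) / h p ^ 3] ∧
      dot3 (vdu β p) (vdu β p) * dot3 (vdv β p) (vdv β p)
          - (dot3 (vdu β p) (vdv β p)) ^ 2 =
        dot3 (cross3 (vdu β p) (vdv β p)) (cross3 (vdu β p) (vdv β p)) ∧
      dot3 (cross3 (vdu β p) (vdv β p)) (cross3 (vdu β p) (vdv β p)) =
        ((pdu h p) ^ 2 + (pdv h p) ^ 2
          + (h p - p.1 * pdu h p - p.2 * pdv h p) ^ 2) / h p ^ 6 ∧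
      (¬(pdu h p = 0 ∧ pdv h p = 0 ∧ h p - p.1 * pdu h p - p.2 * pdv h p = 0) →
        LinearIndependent ℝ ![vdu β p, vdv β p]) := by
  intro p hp
  have hne : h p ≠ 0 := (hpos p hp).ne'
  have hd : HasFDerivAt h (fderiv ℝ h p) p :=
    ((hh.differentiableOn (by norm_num)).differentiableAt (hU.mem_nhds hp)).hasFDerivAt
  have hinv : HasFDerivAt (fun q => (h q)⁻¹) (-(h p ^ 2)⁻¹ • fderiv ℝ h p) p :=
    (hasDerivAt_inv hne).comp_hasFDerivAt p hd
  have h1 : HasFDerivAt (fun q : ℝ × ℝ => q.1) (ContinuousLinearMap.fst ℝ ℝ ℝ) p := hasFDerivAt_fst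
  have h2 : HasFDerivAt (fun q : ℝ × ℝ => q.2) (ContinuousLinearMap.snd ℝ ℝ ℝ) p := hasFDerivAt_snd
  have key : HasFDerivAt (fun q : ℝ × ℝ => (![q.1 * (h q)⁻¹, q.2 * (h q)⁻¹, (h q)⁻¹] : Fin 3 → ℝ))
      (ContinuousLinearMap.pi
        ![p.1 • (-(h p ^ 2)⁻¹ • fderiv ℝ h p) + (h p)⁻¹ • ContinuousLinearMap.fst ℝ ℝ ℝ,
          p.2 • (-(h p ^ 2)⁻¹ • fderiv ℝ h p) + (h p)⁻¹ • ContinuousLinearMap.snd ℝ ℝ ℝ,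
          -(h p ^ 2)⁻¹ • fderiv ℝ h p]) p := by
    rw [hasFDerivAt_pi']
    intro i
    fin_cases i
    · exact h1.mul hinv
    · exact h2.mul hinv
    · exact hinv
  have hb : HasFDerivAt β _ p := key.congr_of_eventuallyEq (by
    filter_upwards [hU.mem_nhds hp] with q hq
    rw [hβ q hq]
    simp [div_eq_mul_inv])
  have eu : vdu β p = ![(h p)⁻¹ - p.1 * pdu h p / h p ^ 2, - p.2 * pdu h p / h p ^ 2,
      - pdu h p / h p ^ 2] := by
    unfold vdu pdu
    rw [hb.fderiv]
    ext i
    fin_cases i <;> simp <;> ring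
  have ev : vdv β p = ![- p.1 * pdv h p / h p ^ 2, (h p)⁻¹ - p.2 * pdv h p / h p ^ 2,
      - pdv h p / h p ^ 2] := by
    unfold vdv pdv
    rw [hb.fderiv]
    ext i
    fin_cases i <;> simp <;> ring
  have hc : cross3 (vdu β p) (vdv β p) =
        ![pdu h p / h p ^ 3, pdv h p / h p ^ 3,
          (h p - p.1 * pdu h p - p.2 * pdv h p) / h p ^ 3] := by
    rw [eu, ev]
    ext i
    fin_cases i <;> simp [cross3] <;> field_simp <;> ring
  refine ⟨hc, ?_, ?_, ?_⟩
  · simp [cross3, dot3]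
    ring
  · rw [hc]
    simp [dot3]
    field_simp
  · intro hn
    rw [LinearIndependent.pair_iff]
    intro s t hst
    have e : ∀ i, s * vdu β p i + t * vdv β p i = 0 := fun i => by
      simpa using congrFun hst i
    have hs : ∀ i, s * cross3 (vdu β p) (vdv β p) i = 0 := by
      intro i
      fin_cases i <;> simp [cross3, -mul_eq_zero]
      · linear_combination vdv β p 2 * e 1 - vdv β p 1 * e 2
      · linear_combination vdv β p 0 * e 2 - vdv β p 2 * e 0
      · linear_combination vdv β p 1 * e 0 - vdv β p 0 * e 1
    have ht : ∀ i, t * cross3 (vdu β p) (vdv β p) i = 0 := by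
      intro i
      fin_cases i <;> simp [cross3, -mul_eq_zero]
      · linear_combination vdu β p 1 * e 2 - vdu β p 2 * e 1
      · linear_combination vdu β p 2 * e 0 - vdu β p 0 * e 2
      · linear_combination vdu β p 0 * e 1 - vdu β p 1 * e 0
    have fin : ∀ r : ℝ, (∀ i, r * cross3 (vdu β p) (vdv β p) i = 0) → r = 0 := by
      intro r hr
      by_contra hr0
      rw [hc] at hr
      have a0 := hr 0
      have a1 := hr 1
      have a2 := hr 2
      simp [hr0, hne] at a0 a1 a2
      exact hn ⟨a0, a1, a2⟩
    exact ⟨fin s hs, fin t ht⟩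
end
end
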